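/- Let n ≥ 2, let x₀ ∈ ℝⁿ, R > 0, and let B = B_R(x₀) be the closed ball of radius R centred at x₀, with open interior B°. Let F : ℝ → ℝ be C² with F(0) = 0 and F'(μ) ≥ 0 for all μ ∈ ℝ, and suppose there exist δ, ε > 0 with |F(μ)| ≥ δ|μ|^{1+ε} for all μ ∈ ℝ. Then there exists a constant C > 0 such that every function u : B → ℝ that is continuous on B, twice continuously differentiable on B°, and satisfies −Δu(x) + F(u(x)) = 0 for all x ∈ B°, obeys |u(x₀)| ≤ C. In particular C is independent of the boundary values of u. -/

import Mathlib

open Set Metric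

/-- The Euclidean Laplacian `Δu(x) = ∑ i, ∂²u/∂xᵢ²(x)`. -/
noncomputable def lap {n : ℕ} (u : EuclideanSpace ℝ (Fin n) → ℝ)
    (x : EuclideanSpace ℝ (Fin n)) : ℝ :=
  ∑ i : Fin n,
    fderiv ℝ (fun y => fderiv ℝ u y (EuclideanSpace.single i 1)) x (EuclideanSpace.single i 1)

/-!
Shrinking the ball from radius `R` to `R / 2` makes `u` bounded on it, so let `u` be bounded above
on a ball of radius `r`. Write `ρ x = r² - ‖x - x₀‖²` and `k = 2 / ε`. For a suitable amplitude
`A`, depending only on `r`, `δ`, `ε` and the dimension, the barrier `w = A ρ ^ (-k)` is a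
supersolution, `Δw ≤ δ w ^ (1 + ε)`: both sides are of order `ρ ^ (-k - 2)`. Since `w` is infinite
on the sphere, if `u` exceeds `w` somewhere then `u - w` has an interior maximum at a point where
`u > w`. There `Δu ≤ Δw ≤ δ w ^ (1 + ε) < δ u ^ (1 + ε) ≤ F u = Δu`, a contradiction. So `u ≤ w`,
and the value of `w` at the centre bounds `u x₀`; for the lower bound, apply this to `-u`.
-/

open Filter Topology Module
open scoped Laplacian Gradient RealInnerProductSpace

section SecondDerivative

variable {𝕜 E F : Type*} [NontriviallyNormedField 𝕜] [NormedAddCommGroup E] [NormedSpace 𝕜 E]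
  [NormedAddCommGroup F] [NormedSpace 𝕜 F]

lemma hasFDerivAt_fderiv_apply_const {f : E → F} {x : E} (hf : ContDiffAt 𝕜 2 f x) (v : E) :
    HasFDerivAt (fun y => fderiv 𝕜 f y v) ((fderiv 𝕜 (fderiv 𝕜 f) x).flip v) x := by
  have hf' : DifferentiableAt 𝕜 (fderiv 𝕜 f) x :=
    (hf.fderiv_right (m := 1) (by norm_num)).differentiableAt (by simp)
  simpa using! hf'.hasFDerivAt.clm_apply (hasFDerivAt_const v x)

lemma fderiv_fderiv_apply_const {f : E → F} {x : E} (hf : ContDiffAt 𝕜 2 f x) (v w : E) :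
    fderiv 𝕜 (fun y => fderiv 𝕜 f y v) x w = iteratedFDeriv 𝕜 2 f x ![w, v] := by
  simp [(hasFDerivAt_fderiv_apply_const hf v).fderiv, iteratedFDeriv_two_apply]

lemma deriv_deriv_comp_add_smul {f : E → F} {x : E} (hf : ContDiffAt 𝕜 2 f x) (v : E) :
    deriv (deriv fun t : 𝕜 => f (x + t • v)) 0 = iteratedFDeriv 𝕜 2 f x ![v, v] := by
  have hline (t : 𝕜) : HasDerivAt (fun t : 𝕜 => x + t • v) v t := by
    simpa using ((hasDerivAt_id t).smul_const v).const_add x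
  have hline_zero : Tendsto (fun t : 𝕜 => x + t • v) (𝓝 0) (𝓝 x) := by
    simpa using (hline 0).continuousAt.tendsto
  have hfirst : deriv (fun t : 𝕜 => f (x + t • v)) =ᶠ[𝓝 0] fun t => fderiv 𝕜 f (x + t • v) v := by
    filter_upwards [hline_zero.eventually (hf.eventually (by simp))] with t ht
    exact ((ht.differentiableAt (by simp)).hasFDerivAt.comp_hasDerivAt t (hline t)).deriv
  have hsecond := (hasFDerivAt_fderiv_apply_const hf v).comp_hasDerivAt_of_eq 0 (hline 0) (by simp)
  simpa [iteratedFDeriv_two_apply] using! hfirst.deriv_eq.trans hsecond.deriv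

lemma iteratedFDeriv_two_comp_apply_self {g : 𝕜 → 𝕜} {f : E → 𝕜} {x : E}
    (hg : ContDiffAt 𝕜 2 g (f x)) (hf : ContDiffAt 𝕜 2 f x) (v : E) :
    iteratedFDeriv 𝕜 2 (g ∘ f) x ![v, v] =
      deriv (deriv g) (f x) * fderiv 𝕜 f x v ^ 2 +
        deriv g (f x) * iteratedFDeriv 𝕜 2 f x ![v, v] := by
  have hfirst : (fun y => fderiv 𝕜 (g ∘ f) y v) =ᶠ[𝓝 x]
      fun y => deriv g (f y) * fderiv 𝕜 f y v := by
    filter_upwards [hf.eventually (by simp),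
      hf.continuousAt.eventually (hg.eventually (by simp))] with y hfy hgy
    have hchain := (hgy.differentiableAt (by simp)).hasDerivAt.comp_hasFDerivAt y
      (hfy.differentiableAt (by simp)).hasFDerivAt
    simp [hchain.fderiv]
  have hg' : DifferentiableAt 𝕜 (deriv g) (f x) :=
    (hasFDerivAt_fderiv_apply_const hg 1).differentiableAt
  have hsecond := (hg'.hasDerivAt.comp_hasFDerivAt x
    (hf.differentiableAt (by simp)).hasFDerivAt).mul (hasFDerivAt_fderiv_apply_const hf v)
  rw [← fderiv_fderiv_apply_const (hg.comp x hf), hfirst.fderiv_eq]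
  refine (congrArg (· v) hsecond.fderiv).trans ?_
  simp only [Function.comp_apply, add_apply, smul_apply, ContinuousLinearMap.flip_apply,
    smul_eq_mul, iteratedFDeriv_two_apply, Matrix.cons_val_zero, Matrix.cons_val_one]
  ring

end SecondDerivative

section LocalMaximum

/-- A strict inequality would make the point a local minimum as well, so that `f` is locally
constant. -/
lemma deriv_deriv_nonpos_of_isLocalMax {f : ℝ → ℝ} {a : ℝ} (hmax : IsLocalMax f a)
    (hf : ContinuousAt f a) : deriv (deriv f) a ≤ 0 := by
  by_contra! hpos
  have hmin : IsLocalMin f a := isLocalMin_of_deriv_deriv_pos hpos hmax.deriv_eq_zero hf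
  have hconst : f =ᶠ[𝓝 a] fun _ => f a := by
    filter_upwards [hmax, hmin] with t hle hge using le_antisymm hle hge
  have hzero : deriv (deriv f) a = 0 := by simpa using hconst.deriv.deriv_eq
  exact hpos.ne' hzero

lemma iteratedFDeriv_two_nonpos_of_isLocalMax {E : Type*} [NormedAddCommGroup E] [NormedSpace ℝ E]
    {f : E → ℝ} {x : E} (hmax : IsLocalMax f x) (hf : ContDiffAt ℝ 2 f x) (v : E) :
    iteratedFDeriv ℝ 2 f x ![v, v] ≤ 0 := by
  have hline : ContinuousAt (fun t : ℝ => x + t • v) 0 := by fun_prop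
  rw [← deriv_deriv_comp_add_smul hf]
  apply deriv_deriv_nonpos_of_isLocalMax
  · exact IsLocalMax.comp_continuous (g := fun t : ℝ => x + t • v) (by simpa using hmax) hline
  · exact ContinuousAt.comp (g := f) (by simpa using hf.continuousAt) hline

/-- Closedness of the superlevel set `{v x₀ ≤ v}` is what the blow-up at the frontier provides. -/
theorem exists_isMaxOn_of_tendsto_atBot_frontier {X α : Type*} [TopologicalSpace X] [LinearOrder α]
    [NoMinOrder α] [TopologicalSpace α] [ClosedIciTopology α] {Ω : Set X} {v : X → α}
    (hΩ : IsCompact (closure Ω)) (hne : Ω.Nonempty) (hv : ContinuousOn v Ω)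
    (hbot : ∀ y ∈ frontier Ω, Tendsto v (𝓝[Ω] y) atBot) : ∃ x ∈ Ω, IsMaxOn v Ω x := by
  obtain ⟨x₀, hx₀⟩ := hne
  set K : Set X := {x ∈ Ω | v x₀ ≤ v x}
  have hKΩ : K ⊆ Ω := sep_subset _ _
  have hKclosed : IsClosed K := by
    refine isClosed_of_closure_subset fun y hy => ?_
    have hfreq : ∃ᶠ x in 𝓝[Ω] y, v x₀ ≤ v x :=
      frequently_nhdsWithin_iff.2 <|
        (mem_closure_iff_frequently.1 hy).mono fun x hx => ⟨hx.2, hx.1⟩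
    by_cases hyΩ : y ∈ Ω
    · exact ⟨hyΩ, ge_of_tendsto_of_frequently (hv y hyΩ) hfreq⟩
    · have hyfr : y ∈ frontier Ω :=
        ⟨closure_mono hKΩ hy, fun hyint => hyΩ (interior_subset hyint)⟩
      have hlt := (hbot y hyfr).eventually (eventually_lt_atBot (v x₀))
      exact (hfreq (hlt.mono fun x hx => hx.not_ge)).elim
  have hKcompact : IsCompact K :=
    hΩ.of_isClosed_subset hKclosed (hKΩ.trans subset_closure)
  obtain ⟨x₁, hx₁, hmax⟩ := hKcompact.exists_isMaxOn ⟨x₀, hx₀, le_rfl⟩ (hv.mono hKΩ)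
  refine ⟨x₁, hx₁.1, fun x hx => ?_⟩
  rcases le_total (v x₀) (v x) with hge | hle
  · exact hmax ⟨hx, hge⟩
  · exact hle.trans hx₁.2

end LocalMaximum

lemma contDiff_const_sub_norm_sub_sq {E : Type*} [NormedAddCommGroup E] [InnerProductSpace ℝ E]
    {n : WithTop ℕ∞} (c : ℝ) (x₀ : E) : ContDiff ℝ n fun y => c - ‖y - x₀‖ ^ 2 :=
  contDiff_const.sub ((contDiff_id.sub contDiff_const).norm_sq ℝ)

section Laplacian

variable {E : Type*} [NormedAddCommGroup E] [InnerProductSpace ℝ E] [FiniteDimensional ℝ E]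

lemma laplacian_nonpos_of_isLocalMax {f : E → ℝ} {x : E} (hmax : IsLocalMax f x)
    (hf : ContDiffAt ℝ 2 f x) : Δ f x ≤ 0 := by
  rw [InnerProductSpace.laplacian_eq_iteratedFDeriv_stdOrthonormalBasis]
  exact Finset.sum_nonpos fun i _ => iteratedFDeriv_two_nonpos_of_isLocalMax hmax hf _

theorem le_of_laplacian_lt_of_tendsto_atTop_frontier {Ω : Set E} {u w : E → ℝ} (hΩ : IsOpen Ω)
    (hΩb : Bornology.IsBounded Ω) (hu : ContDiffOn ℝ 2 u Ω) (hw : ContDiffOn ℝ 2 w Ω)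
    (hub : BddAbove (u '' Ω)) (hwtop : ∀ y ∈ frontier Ω, Tendsto w (𝓝[Ω] y) atTop)
    (hlt : ∀ x ∈ Ω, w x < u x → Δ w x < Δ u x) {x : E} (hx : x ∈ Ω) : u x ≤ w x := by
  obtain ⟨M, hM⟩ := hub
  have hbot : ∀ y ∈ frontier Ω, Tendsto (u - w) (𝓝[Ω] y) atBot := fun y hy => by
    simpa only [sub_eq_add_neg] using! tendsto_atBot_add_left_of_ge' _ M
      (eventually_mem_nhdsWithin.mono fun z hz => hM (mem_image_of_mem u hz))
      (tendsto_neg_atTop_atBot.comp (hwtop y hy))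
  obtain ⟨x₁, hx₁, hmax⟩ := exists_isMaxOn_of_tendsto_atBot_frontier hΩb.isCompact_closure ⟨x, hx⟩
    (hu.continuousOn.sub hw.continuousOn) hbot
  by_contra! hwu
  have hwu₁ : w x₁ < u x₁ := sub_pos.1 ((sub_pos.2 hwu).trans_le (hmax hx))
  have hΩx₁ : Ω ∈ 𝓝 x₁ := hΩ.mem_nhds hx₁
  have hu₁ := hu.contDiffAt hΩx₁
  have hw₁ := hw.contDiffAt hΩx₁
  have hle := laplacian_nonpos_of_isLocalMax (hmax.isLocalMax hΩx₁) (hu₁.sub hw₁)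
  rw [hu₁.laplacian_sub hw₁] at hle
  linarith [hlt x₁ hx₁ hwu₁]

lemma laplacian_comp {g : ℝ → ℝ} {f : E → ℝ} {x : E} (hg : ContDiffAt ℝ 2 g (f x))
    (hf : ContDiffAt ℝ 2 f x) :
    Δ (g ∘ f) x = deriv (deriv g) (f x) * ‖∇ f x‖ ^ 2 + deriv g (f x) * Δ f x := by
  simp only [InnerProductSpace.laplacian_eq_iteratedFDeriv_stdOrthonormalBasis,
    iteratedFDeriv_two_comp_apply_self hg hf, Finset.sum_add_distrib, ← Finset.mul_sum,
    ← inner_gradient_left, OrthonormalBasis.sum_sq_inner_left]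

lemma hasGradientAt_const_sub_norm_sub_sq (c : ℝ) (x₀ x : E) :
    HasGradientAt (fun y => c - ‖y - x₀‖ ^ 2) (-(2 : ℝ) • (x - x₀)) x := by
  rw [hasGradientAt_iff_hasFDerivAt]
  refine (((hasFDerivAt_id x).sub_const x₀).norm_sq.const_sub c).congr_fderiv ?_
  ext v
  simp

lemma laplacian_const_sub_norm_sub_sq (c : ℝ) (x₀ x : E) :
    Δ (fun y => c - ‖y - x₀‖ ^ 2) x = -2 * finrank ℝ E := by
  have hsecond (v : E) :
      iteratedFDeriv ℝ 2 (fun y => c - ‖y - x₀‖ ^ 2) x ![v, v] = -2 * ‖v‖ ^ 2 := by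
    have hfirst : (fun y => fderiv ℝ (fun z => c - ‖z - x₀‖ ^ 2) y v) =
        fun y => -2 * ⟪y - x₀, v⟫ := by
      ext y
      simp [(hasGradientAt_const_sub_norm_sub_sq c x₀ y).hasFDerivAt.fderiv, ← inner_sub_left]
    have hinner : HasFDerivAt (fun y => -2 * ⟪y - x₀, v⟫) _ x :=
      (((hasFDerivAt_id x).sub_const x₀).inner ℝ (hasFDerivAt_const v x)).const_mul (-2)
    rw [← fderiv_fderiv_apply_const (contDiff_const_sub_norm_sub_sq c x₀).contDiffAt, hfirst,
      hinner.fderiv]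
    simp
  simp [InnerProductSpace.laplacian_eq_iteratedFDeriv_stdOrthonormalBasis, hsecond, mul_comm]

lemma laplacian_rpow_const_sub_norm_sub_sq {c : ℝ} {x₀ x : E} (p : ℝ)
    (hx : c - ‖x - x₀‖ ^ 2 ≠ 0) :
    Δ (fun y => (c - ‖y - x₀‖ ^ 2) ^ p) x =
      4 * p * (p - 1) * ‖x - x₀‖ ^ 2 * (c - ‖x - x₀‖ ^ 2) ^ (p - 2) -
        2 * p * finrank ℝ E * (c - ‖x - x₀‖ ^ 2) ^ (p - 1) := by
  have hp : p - 1 - 1 = p - 2 := by ring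
  refine (laplacian_comp (g := fun s => s ^ p) (f := fun y => c - ‖y - x₀‖ ^ 2)
    (Real.contDiffAt_rpow_const_of_ne hx)
    (contDiff_const_sub_norm_sub_sq c x₀).contDiffAt).trans ?_
  simp only [Real.deriv_rpow_const', deriv_const_mul_field',
    (hasGradientAt_const_sub_norm_sub_sq c x₀ x).gradient, laplacian_const_sub_norm_sub_sq,
    norm_smul, hp]
  norm_num
  ring

end Laplacian

section Barrier

variable {E : Type*} [NormedAddCommGroup E] [InnerProductSpace ℝ E] {x₀ x : E} {R δ ε : ℝ}

lemma sq_sub_norm_sub_sq_pos {E : Type*} [SeminormedAddCommGroup E] {x₀ x : E} {R : ℝ}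
    (hx : x ∈ ball x₀ R) : 0 < R ^ 2 - ‖x - x₀‖ ^ 2 := by
  rw [mem_ball_iff_norm] at hx
  exact sub_pos.2 (by gcongr)

/-- The amplitude of the Keller–Osserman barrier in dimension `d`: the solution `A` of
`δ A ^ ε = 2 k (d + 2 (k + 1)) R²` with `k = 2 / ε`. -/
noncomputable def kellerOssermanAmplitude (d : ℕ) (δ ε R : ℝ) : ℝ :=
  (2 * (2 / ε) * (d + 2 * (2 / ε + 1)) * R ^ 2 / δ) ^ (1 / ε)

/-- The Keller–Osserman barrier `A (R² - ‖x - x₀‖²) ^ (-2 / ε)`, a supersolution of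
`Δw = δ w ^ (1 + ε)` on the ball `B_R(x₀)` that blows up on the sphere. -/
noncomputable def kellerOssermanBarrier (δ ε R : ℝ) (x₀ x : E) : ℝ :=
  kellerOssermanAmplitude (finrank ℝ E) δ ε R * (R ^ 2 - ‖x - x₀‖ ^ 2) ^ (-(2 / ε))

lemma kellerOssermanAmplitude_pos (d : ℕ) (hR : 0 < R) (hδ : 0 < δ) (hε : 0 < ε) :
    0 < kellerOssermanAmplitude d δ ε R := by
  unfold kellerOssermanAmplitude
  positivity

lemma mul_kellerOssermanAmplitude_rpow (d : ℕ) (R : ℝ) (hδ : 0 < δ) (hε : 0 < ε) :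
    δ * kellerOssermanAmplitude d δ ε R ^ ε = 2 * (2 / ε) * (d + 2 * (2 / ε + 1)) * R ^ 2 := by
  rw [kellerOssermanAmplitude, ← Real.rpow_mul (by positivity), one_div_mul_cancel hε.ne',
    Real.rpow_one, mul_div_cancel₀ _ hδ.ne']

lemma kellerOssermanBarrier_pos (hR : 0 < R) (hδ : 0 < δ) (hε : 0 < ε) (hx : x ∈ ball x₀ R) :
    0 < kellerOssermanBarrier δ ε R x₀ x :=
  mul_pos (kellerOssermanAmplitude_pos _ hR hδ hε)
    (Real.rpow_pos_of_pos (sq_sub_norm_sub_sq_pos hx) _)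

lemma kellerOssermanBarrier_self (δ ε R : ℝ) (x₀ : E) :
    kellerOssermanBarrier δ ε R x₀ x₀ =
      kellerOssermanAmplitude (finrank ℝ E) δ ε R * (R ^ 2) ^ (-(2 / ε)) := by
  simp [kellerOssermanBarrier]

lemma contDiffAt_rpow_sq_sub_norm_sub_sq (p : ℝ) (hx : x ∈ ball x₀ R) :
    ContDiffAt ℝ 2 (fun y => (R ^ 2 - ‖y - x₀‖ ^ 2) ^ p) x :=
  (contDiff_const_sub_norm_sub_sq _ x₀).contDiffAt.rpow_const_of_ne (sq_sub_norm_sub_sq_pos hx).ne'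

lemma contDiffOn_kellerOssermanBarrier (δ ε R : ℝ) (x₀ : E) :
    ContDiffOn ℝ 2 (kellerOssermanBarrier δ ε R x₀) (ball x₀ R) := fun _ hx =>
  (contDiffAt_const.mul (contDiffAt_rpow_sq_sub_norm_sub_sq _ hx)).contDiffWithinAt

lemma tendsto_kellerOssermanBarrier_atTop (hR : 0 < R) (hδ : 0 < δ) (hε : 0 < ε)
    (hx : x ∈ sphere x₀ R) :
    Tendsto (kellerOssermanBarrier δ ε R x₀) (𝓝[ball x₀ R] x) atTop := by
  have hzero : Tendsto (fun y => R ^ 2 - ‖y - x₀‖ ^ 2) (𝓝[ball x₀ R] x) (𝓝[>] 0) := by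
    refine tendsto_nhdsWithin_iff.2 ⟨?_, eventually_mem_nhdsWithin.mono fun y hy =>
      sq_sub_norm_sub_sq_pos hy⟩
    have hcont : Continuous fun y : E => R ^ 2 - ‖y - x₀‖ ^ 2 := by fun_prop
    simpa [mem_sphere_iff_norm.1 hx] using (hcont.tendsto x).mono_left nhdsWithin_le_nhds
  exact ((tendsto_rpow_neg_nhdsGT_zero (by simpa using hε)).comp hzero).const_mul_atTop
    (kellerOssermanAmplitude_pos _ hR hδ hε)

variable [FiniteDimensional ℝ E]

lemma laplacian_rpow_neg_sq_sub_norm_sub_sq_le {k : ℝ} (hk : 0 ≤ k) (hx : x ∈ ball x₀ R) :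
    Δ (fun y => (R ^ 2 - ‖y - x₀‖ ^ 2) ^ (-k)) x ≤
      2 * k * (finrank ℝ E + 2 * (k + 1)) * R ^ 2 * (R ^ 2 - ‖x - x₀‖ ^ 2) ^ (-k - 2) := by
  have hρ := sq_sub_norm_sub_sq_pos hx
  have hnormR : ‖x - x₀‖ ^ 2 ≤ R ^ 2 := (sub_pos.1 hρ).le
  rw [laplacian_rpow_const_sub_norm_sub_sq _ hρ.ne']
  set ρ := R ^ 2 - ‖x - x₀‖ ^ 2
  have hρR : ρ ≤ R ^ 2 := sub_le_self _ (by positivity)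
  have hpow : ρ ^ (-k - 1) = ρ * ρ ^ (-k - 2) := by
    rw [mul_comm, ← Real.rpow_add_one hρ.ne']
    ring_nf
  calc 4 * -k * (-k - 1) * ‖x - x₀‖ ^ 2 * ρ ^ (-k - 2) - 2 * -k * finrank ℝ E * ρ ^ (-k - 1)
      = 2 * k * (finrank ℝ E * ρ + 2 * (k + 1) * ‖x - x₀‖ ^ 2) * ρ ^ (-k - 2) := by
        rw [hpow]; ring
    _ ≤ 2 * k * (finrank ℝ E * R ^ 2 + 2 * (k + 1) * R ^ 2) * ρ ^ (-k - 2) := by gcongr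
    _ = 2 * k * (finrank ℝ E + 2 * (k + 1)) * R ^ 2 * ρ ^ (-k - 2) := by ring

/-- The exponent `k = 2 / ε` is the one with `k (1 + ε) = k + 2`. -/
lemma laplacian_kellerOssermanBarrier_le (hR : 0 < R) (hδ : 0 < δ) (hε : 0 < ε)
    (hx : x ∈ ball x₀ R) :
    Δ (kellerOssermanBarrier δ ε R x₀) x ≤ δ * kellerOssermanBarrier δ ε R x₀ x ^ (1 + ε) := by
  have hρ := sq_sub_norm_sub_sq_pos hx
  have hA := kellerOssermanAmplitude_pos (finrank ℝ E) hR hδ hε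
  have hAε := mul_kellerOssermanAmplitude_rpow (finrank ℝ E) R hδ hε
  have hk : -(2 / ε) * (1 + ε) = -(2 / ε) - 2 := by field_simp; ring
  calc Δ (kellerOssermanBarrier δ ε R x₀) x
      = kellerOssermanAmplitude (finrank ℝ E) δ ε R *
          Δ (fun y => (R ^ 2 - ‖y - x₀‖ ^ 2) ^ (-(2 / ε))) x :=
        InnerProductSpace.laplacian_smul (kellerOssermanAmplitude (finrank ℝ E) δ ε R)
          (contDiffAt_rpow_sq_sub_norm_sub_sq _ hx)
    _ ≤ kellerOssermanAmplitude (finrank ℝ E) δ ε R *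
          (2 * (2 / ε) * (finrank ℝ E + 2 * (2 / ε + 1)) * R ^ 2 *
            (R ^ 2 - ‖x - x₀‖ ^ 2) ^ (-(2 / ε) - 2)) := by
        gcongr
        exact laplacian_rpow_neg_sq_sub_norm_sub_sq_le (by positivity) hx
    _ = δ * kellerOssermanBarrier δ ε R x₀ x ^ (1 + ε) := by
        rw [kellerOssermanBarrier, Real.mul_rpow hA.le (by positivity), ← Real.rpow_mul hρ.le, hk,
          ← hAε, Real.rpow_add hA, Real.rpow_one]
        ring

theorem le_kellerOssermanBarrier {u : E → ℝ} (hR : 0 < R) (hδ : 0 < δ) (hε : 0 < ε)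
    (hu : ContDiffOn ℝ 2 u (ball x₀ R)) (hub : BddAbove (u '' ball x₀ R))
    (hsub : ∀ x ∈ ball x₀ R, 0 < u x → δ * u x ^ (1 + ε) ≤ Δ u x) (hx : x ∈ ball x₀ R) :
    u x ≤ kellerOssermanBarrier δ ε R x₀ x := by
  refine le_of_laplacian_lt_of_tendsto_atTop_frontier isOpen_ball isBounded_ball hu
    (contDiffOn_kellerOssermanBarrier δ ε R x₀) hub
    (fun y hy => tendsto_kellerOssermanBarrier_atTop hR hδ hε (frontier_ball_subset_sphere hy))
    (fun y hy hlt => ?_) hx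
  have hpos := kellerOssermanBarrier_pos hR hδ hε hy
  calc Δ (kellerOssermanBarrier δ ε R x₀) y
      ≤ δ * kellerOssermanBarrier δ ε R x₀ y ^ (1 + ε) :=
        laplacian_kellerOssermanBarrier_le hR hδ hε hy
    _ < δ * u y ^ (1 + ε) := by gcongr
    _ ≤ Δ u y := hsub y hy (hpos.trans hlt)

theorem le_kellerOssermanBarrier_half_center {u : E → ℝ} (hR : 0 < R) (hδ : 0 < δ) (hε : 0 < ε)
    (hu : ContDiffOn ℝ 2 u (ball x₀ R))
    (hsub : ∀ x ∈ ball x₀ R, 0 < u x → δ * u x ^ (1 + ε) ≤ Δ u x) :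
    u x₀ ≤ kellerOssermanBarrier δ ε (R / 2) x₀ x₀ := by
  have hhalf : closedBall x₀ (R / 2) ⊆ ball x₀ R := closedBall_subset_ball (half_lt_self hR)
  have hball : ball x₀ (R / 2) ⊆ ball x₀ R := ball_subset_closedBall.trans hhalf
  have hub : BddAbove (u '' ball x₀ (R / 2)) :=
    ((isCompact_closedBall x₀ (R / 2)).bddAbove_image (hu.continuousOn.mono hhalf)).mono
      (image_mono ball_subset_closedBall)
  exact le_kellerOssermanBarrier (half_pos hR) hδ hε (hu.mono hball) hub
    (fun x hx => hsub x (hball hx)) (mem_ball_self (half_pos hR))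

end Barrier

lemma lap_eq_laplacian {n : ℕ} {u : EuclideanSpace ℝ (Fin n) → ℝ} {x : EuclideanSpace ℝ (Fin n)}
    (hu : ContDiffAt ℝ 2 u x) : lap u x = Δ u x := by
  simp [lap, fderiv_fderiv_apply_const hu,
    InnerProductSpace.laplacian_eq_iteratedFDeriv_orthonormalBasis u
      (EuclideanSpace.basisFun (Fin n) ℝ)]

lemma mul_nonneg_of_deriv_nonneg {F : ℝ → ℝ} (hF : Differentiable ℝ F) (hF0 : F 0 = 0)
    (hF' : ∀ μ, 0 ≤ deriv F μ) (μ : ℝ) : 0 ≤ μ * F μ := by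
  have hmono : Monotone F := monotone_of_deriv_nonneg hF hF'
  rcases le_total 0 μ with hμ | hμ
  · exact mul_nonneg hμ (hF0 ▸ hmono hμ)
  · exact mul_nonneg_of_nonpos_of_nonpos hμ (hF0 ▸ hmono hμ)

theorem stmt_1_general {E : Type*} [NormedAddCommGroup E] [InnerProductSpace ℝ E]
    [FiniteDimensional ℝ E] {R δ ε : ℝ} (hR : 0 < R) (hδ : 0 < δ) (hε : 0 < ε) :
    ∃ C : ℝ, 0 < C ∧ ∀ (x₀ : E) (F : ℝ → ℝ), (∀ μ, 0 ≤ μ * F μ) →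
      (∀ μ, δ * |μ| ^ (1 + ε) ≤ |F μ|) → ∀ u : E → ℝ, ContDiffOn ℝ 2 u (ball x₀ R) →
        (∀ x ∈ ball x₀ R, -Δ u x + F (u x) = 0) → |u x₀| ≤ C := by
  refine ⟨kellerOssermanBarrier δ ε (R / 2) (0 : E) 0, kellerOssermanBarrier_pos (half_pos hR) hδ hε
    (mem_ball_self (half_pos hR)), fun x₀ F hsign hgrow u hu hpde => abs_le'.2 ?_⟩
  rw [kellerOssermanBarrier_self, ← kellerOssermanBarrier_self δ ε (R / 2) x₀]
  constructor
  · refine le_kellerOssermanBarrier_half_center hR hδ hε hu fun x hx hpos => ?_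
    have hF : 0 ≤ F (u x) := nonneg_of_mul_nonneg_right (hsign (u x)) hpos
    have h := hgrow (u x)
    rw [abs_of_pos hpos, abs_of_nonneg hF] at h
    linarith [hpde x hx]
  · refine le_kellerOssermanBarrier_half_center (u := -u) hR hδ hε hu.neg fun x hx hpos => ?_
    have hneg : u x < 0 := neg_pos.1 hpos
    have hF : F (u x) ≤ 0 := nonpos_of_mul_nonneg_right (hsign (u x)) hneg
    have h := hgrow (u x)
    rw [abs_of_neg hneg, abs_of_nonpos hF] at h
    rw [InnerProductSpace.laplacian_neg, Pi.neg_apply, Pi.neg_apply]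
    linarith [hpde x hx]

theorem stmt_1 (n : ℕ) (hn : 2 ≤ n) (x₀ : EuclideanSpace ℝ (Fin n)) (R : ℝ) (hR : 0 < R)
    (F : ℝ → ℝ) (δ ε : ℝ) (hδ : 0 < δ) (hε : 0 < ε)
    (hF : ContDiff ℝ 2 F) (hF0 : F 0 = 0)
    (hFmono : ∀ μ : ℝ, 0 ≤ deriv F μ)
    (hFgrow : ∀ μ : ℝ, δ * |μ| ^ (1 + ε) ≤ |F μ|) :
    ∃ C : ℝ, 0 < C ∧
      ∀ u : EuclideanSpace ℝ (Fin n) → ℝ,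
        ContinuousOn u (closedBall x₀ R) → ContDiffOn ℝ 2 u (ball x₀ R) →
        (∀ x ∈ ball x₀ R, -lap u x + F (u x) = 0) →
        |u x₀| ≤ C := by
  obtain ⟨C, hC, hbound⟩ := stmt_1_general (E := EuclideanSpace ℝ (Fin n)) hR hδ hε
  have hsign := mul_nonneg_of_deriv_nonneg (hF.differentiable (by simp)) hF0 hFmono
  refine ⟨C, hC, fun u _ hu hpde => hbound x₀ F hsign hFgrow u hu fun x hx => ?_⟩
  rw [← lap_eq_laplacian (hu.contDiffAt (isOpen_ball.mem_nhds hx))]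
  exact hpde x hx
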